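/- Let k be a field and A = ⊕_{n,w} A^n_w a dg k-algebra equipped with an additional 'weight' grading by w ∈ ℤ that is preserved by the differential and multiplicative (A^n_w · A^m_v ⊆ A^{n+m}_{w+v}, d(A^n_w) ⊆ A^{n+1}_w). If for every n the cohomology H^n(A) is pure of weight n (i.e. the weight-w part of H^n(A) vanishes for w ≠ n), then A is formal: A and H(A) (with zero differential) are connected by a chain of quasi-isomorphisms of dg algebras. -/

import Mathlib

/-- A differential graded `k`-algebra equipped with an additional multiplicative `weight`
grading preserved by the differential: `A = ⊕_{n,w} A^n_w`, with
`A^n_w · A^m_v ⊆ A^{n+m}_{w+v}` and `d(A^n_w) ⊆ A^{n+1}_w`. -/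
structure DGWAlg (k : Type) [Field k] where
  carrier : Type
  [ring : Ring carrier]
  [alg : Algebra k carrier]
  /-- `grading n w` is the piece of cohomological degree `n` and weight `w`. -/
  grading : ℤ → ℤ → Submodule k carrier
  internal : DirectSum.IsInternal (fun p : ℤ × ℤ => grading p.1 p.2)
  mul_mem : ∀ {n w m v : ℤ} {a b : carrier}, a ∈ grading n w → b ∈ grading m v →
    a * b ∈ grading (n + m) (w + v)
  /-- the differential, a `k`-linear map of degree `+1` -/
  d : carrier →ₗ[k] carrier
  d_squared : ∀ a, d (d a) = 0
  d_mem : ∀ {n w : ℤ} {a : carrier}, a ∈ grading n w → d a ∈ grading (n + 1) w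
  d_one : d 1 = 0
  /-- the graded Leibniz rule -/
  leibniz : ∀ {n w : ℤ} (a b : carrier), a ∈ grading n w →
    d (a * b) = d a * b + (((-1 : ℤˣ) ^ n : ℤˣ) : ℤ) • (a * d b)

attribute [instance] DGWAlg.ring DGWAlg.alg

/-- The degree-`n` part of a dg algebra (ignoring the weight grading). -/
def DGWAlg.deg {k : Type} [Field k] (A : DGWAlg k) (n : ℤ) : Submodule k A.carrier :=
  ⨆ w : ℤ, A.grading n w

/-- A morphism of dg algebras: a `k`-algebra homomorphism commuting with the differentials
and preserving the cohomological degree. -/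
def IsDGHom {k : Type} [Field k] (A B : DGWAlg k) (f : A.carrier →ₐ[k] B.carrier) : Prop :=
  (∀ a, f (A.d a) = B.d (f a)) ∧
    ∀ n : ℤ, (A.deg n).map f.toLinearMap ≤ B.deg n

/-- A morphism of dg algebras is a quasi-isomorphism if it induces a bijection on
cohomology: injectivity and surjectivity on cohomology classes, stated elementwise. -/
def IsQuasiIso {k : Type} [Field k] (A B : DGWAlg k) (f : A.carrier →ₐ[k] B.carrier) : Prop :=
  (∀ a : A.carrier, A.d a = 0 → (∃ b, B.d b = f a) → ∃ x, A.d x = a) ∧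
    (∀ b : B.carrier, B.d b = 0 → ∃ a : A.carrier, A.d a = 0 ∧ ∃ c, B.d c = b - f a)

namespace FormalPure

theorem isInternal_of_proj {k M ι : Type} [Field k] [AddCommGroup M] [Module k M] [DecidableEq ι]
    (G : ι → Submodule k M) (q : ι → M →ₗ[k] M)
    (h1 : ∀ i, ∀ x ∈ G i, q i x = x) (h2 : ∀ i j, i ≠ j → ∀ x ∈ G j, q i x = 0)
    (h3 : ∀ x : M, x ∈ ⨆ i, G i) : DirectSum.IsInternal G := by
  rw [DirectSum.isInternal_submodule_iff_iSupIndep_and_iSup_eq_top]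
  refine ⟨?_, eq_top_iff.2 fun x _ => h3 x⟩
  intro i
  rw [Submodule.disjoint_def]
  intro x hx hx'
  have hle : (⨆ j, ⨆ (_ : j ≠ i), G j) ≤ LinearMap.ker (q i) :=
    iSup₂_le fun j hj y hy => h2 i j hj.symm y hy
  rw [← h1 i x hx]
  exact hle hx'

variable {k : Type} [Field k] (A : DGWAlg k)

/-- bigraded piece -/
abbrev G (p : ℤ × ℤ) : Submodule k A.carrier := A.grading p.1 p.2

theorem exists_proj : ∃ q : ℤ × ℤ → A.carrier →ₗ[k] A.carrier,
    (∀ i a, q i a ∈ G A i) ∧ (∀ i, ∀ x ∈ G A i, q i x = x) ∧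
    (∀ i j, i ≠ j → ∀ x ∈ G A j, q i x = 0) ∧
    (∀ (N : Submodule k A.carrier) a, (∀ i, q i a ∈ N) → a ∈ N) := by
  classical
  let _ : DirectSum.Decomposition (G A) := DirectSum.IsInternal.chooseDecomposition _ A.internal
  refine ⟨fun i => (G A i).subtype ∘ₗ DirectSum.component k _ _ i ∘ₗ
    (DirectSum.decomposeLinearEquiv (G A)).toLinearMap, ?_, ?_, ?_, ?_⟩
  · intro i a
    exact SetLike.coe_mem _
  · intro i x hx
    exact DirectSum.decompose_of_mem_same (G A) hx
  · intro i j hij x hx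
    exact DirectSum.decompose_of_mem_ne (G A) hx hij.symm
  · intro N a h
    rw [← DirectSum.sum_support_decompose (G A) a]
    exact Submodule.sum_mem _ fun i _ => h i

/-- projection -/
noncomputable def q : ℤ × ℤ → A.carrier →ₗ[k] A.carrier := (exists_proj A).choose

theorem q_mem (i) (a) : q A i a ∈ G A i := (exists_proj A).choose_spec.1 i a
theorem q_same (i) : ∀ x ∈ G A i, q A i x = x := (exists_proj A).choose_spec.2.1 i
theorem q_ne (i j) (h : i ≠ j) : ∀ x ∈ G A j, q A i x = 0 :=
  (exists_proj A).choose_spec.2.2.1 i j h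
theorem mem_of_q (N : Submodule k A.carrier) (a) (h : ∀ i, q A i a ∈ N) : a ∈ N :=
  (exists_proj A).choose_spec.2.2.2 N a h

theorem lin_ext {M : Type} [AddCommGroup M] [Module k M] (f g : A.carrier →ₗ[k] M)
    (h : ∀ i, ∀ x ∈ G A i, f x = g x) (x) : f x = g x := by
  have : x ∈ LinearMap.eqLocus f g := mem_of_q A _ x fun i => h i _ (q_mem A i x)
  exact this

theorem q_d (n w : ℤ) (c) : q A (n + 1, w) (A.d c) = A.d (q A (n, w) c) := by
  refine lin_ext A (q A (n+1,w) ∘ₗ A.d) (A.d ∘ₗ q A (n,w)) ?_ c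
  rintro ⟨m, v⟩ x hx
  have hd := A.d_mem hx
  by_cases h : (n, w) = (m, v)
  · cases h
    simp only [LinearMap.comp_apply]
    rw [q_same A _ x hx]
    exact q_same A (n+1, w) _ hd
  · simp only [LinearMap.comp_apply]
    rw [q_ne A _ _ h x hx, map_zero]
    refine q_ne A (n+1, w) (m+1, v) ?_ _ hd
    intro h'
    apply h
    simpa using h'

theorem q_mul (j : ℤ × ℤ) (a) (ha : a ∈ G A j) (x) : q A j (a * x) = a * q A 0 x := by
  refine lin_ext A (q A j ∘ₗ LinearMap.mulLeft k a) (LinearMap.mulLeft k a ∘ₗ q A 0) ?_ x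
  rintro i x hx
  have hm : a * x ∈ G A (j + i) := A.mul_mem ha hx
  simp only [LinearMap.comp_apply, LinearMap.mulLeft_apply]
  by_cases h : i = 0
  · subst h
    rw [q_same A _ x hx]
    rw [add_zero] at hm
    exact q_same A _ _ hm
  · rw [q_ne A 0 i (Ne.symm h) x hx, mul_zero]
    refine q_ne A _ _ ?_ _ hm
    simpa using h

theorem one_mem : (1 : A.carrier) ∈ G A 0 := by
  have : (1 : A.carrier) * q A 0 1 = 1 := by
    refine lin_ext A (LinearMap.mulRight k (q A 0 1)) LinearMap.id ?_ 1
    intro i x hx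
    simp only [LinearMap.mulRight_apply, LinearMap.id_apply]
    rw [← q_mul A i x hx, mul_one, q_same A i x hx]
  rw [one_mul] at this
  rw [← this]
  exact q_mem A 0 1

theorem exists_prim (n w : ℤ) (a) (ha : a ∈ A.grading n w) (h : ∃ b, A.d b = a) :
    ∃ c ∈ A.grading (n - 1) w, A.d c = a := by
  obtain ⟨b, rfl⟩ := h
  refine ⟨q A (n-1, w) b, q_mem A (n-1, w) b, ?_⟩
  rw [← q_d, sub_add_cancel]
  exact q_same A (n, w) _ ha

/-- truncation pieces -/
def S (p : ℤ × ℤ) : Submodule k A.carrier where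
  carrier := {a | a ∈ G A p ∧ (p.2 < p.1 → a = 0) ∧ (p.2 = p.1 → A.d a = 0)}
  zero_mem' := ⟨zero_mem _, fun _ => rfl, fun _ => map_zero _⟩
  add_mem' := by
    rintro a b ⟨h1, h2, h3⟩ ⟨h1', h2', h3'⟩
    exact ⟨add_mem h1 h1', fun h => by rw [h2 h, h2' h, add_zero],
      fun h => by rw [map_add, h3 h, h3' h, add_zero]⟩
  smul_mem' := by
    rintro c a ⟨h1, h2, h3⟩
    exact ⟨Submodule.smul_mem _ c h1, fun h => by rw [h2 h, smul_zero],
      fun h => by rw [map_smul, h3 h, smul_zero]⟩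

/-- ideal pieces -/
def T (p : ℤ × ℤ) : Submodule k A.carrier where
  carrier := {a | a ∈ S A p ∧ (p.2 = p.1 → ∃ c, A.d c = a)}
  zero_mem' := ⟨zero_mem _, fun _ => ⟨0, map_zero _⟩⟩
  add_mem' := by
    rintro a b ⟨h1, h2⟩ ⟨h1', h2'⟩
    refine ⟨add_mem h1 h1', fun h => ?_⟩
    obtain ⟨c, rfl⟩ := h2 h
    obtain ⟨c', rfl⟩ := h2' h
    exact ⟨c + c', map_add _ _ _⟩
  smul_mem' := by
    rintro r a ⟨h1, h2⟩
    refine ⟨Submodule.smul_mem _ r h1, fun h => ?_⟩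
    obtain ⟨c, rfl⟩ := h2 h
    exact ⟨r • c, map_smul _ _ _⟩

theorem S_mul {p r : ℤ × ℤ} {a b} (ha : a ∈ S A p) (hb : b ∈ S A r) : a * b ∈ S A (p + r) := by
  obtain ⟨h1, h2, h3⟩ := ha
  obtain ⟨h1', h2', h3'⟩ := hb
  refine ⟨A.mul_mem h1 h1', fun h => ?_, fun h => ?_⟩
  · simp only [Prod.fst_add, Prod.snd_add] at h
    rcases lt_or_ge p.2 p.1 with h4 | h4
    · rw [h2 h4, zero_mul]
    · rw [h2' (by omega), mul_zero]
  · simp only [Prod.fst_add, Prod.snd_add] at h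
    rcases lt_trichotomy p.2 p.1 with h4 | h4 | h4
    · rw [h2 h4, zero_mul, map_zero]
    · rw [A.leibniz a b h1, h3 h4, h3' (by omega), zero_mul, mul_zero, smul_zero, add_zero]
    · rw [h2' (by omega), mul_zero, map_zero]

theorem ST_mul {p r : ℤ × ℤ} {a b} (ha : a ∈ S A p) (hb : b ∈ T A r) : a * b ∈ T A (p + r) := by
  refine ⟨S_mul A ha hb.1, fun h => ?_⟩
  obtain ⟨h1, h2, h3⟩ := ha
  obtain ⟨⟨h1', h2', h3'⟩, h4'⟩ := hb
  simp only [Prod.fst_add, Prod.snd_add] at h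
  rcases lt_trichotomy p.2 p.1 with h4 | h4 | h4
  · exact ⟨0, by rw [h2 h4, zero_mul, map_zero]⟩
  · obtain ⟨c, rfl⟩ := h4' (by omega)
    refine ⟨(((-1 : ℤˣ) ^ p.1 : ℤˣ) : ℤ) • (a * c), ?_⟩
    rw [map_zsmul, A.leibniz a c h1, h3 h4, zero_mul, zero_add, smul_smul, ← Units.val_mul,
      ← mul_zpow]
    simp
  · exact ⟨0, by rw [h2' (by omega), mul_zero, map_zero]⟩

theorem TS_mul {p r : ℤ × ℤ} {a b} (ha : a ∈ T A p) (hb : b ∈ S A r) : a * b ∈ T A (p + r) := by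
  refine ⟨S_mul A ha.1 hb, fun h => ?_⟩
  obtain ⟨⟨h1, h2, h3⟩, h4'⟩ := ha
  obtain ⟨h1', h2', h3'⟩ := hb
  simp only [Prod.fst_add, Prod.snd_add] at h
  rcases lt_trichotomy p.2 p.1 with h4 | h4 | h4
  · exact ⟨0, by rw [h2 h4, zero_mul, map_zero]⟩
  · obtain ⟨c, hc, rfl⟩ := exists_prim A _ _ a h1 (h4' h4)
    refine ⟨c * b, ?_⟩
    rw [A.leibniz c b hc, h3' (by omega), mul_zero, smul_zero, add_zero]
  · exact ⟨0, by rw [h2' (by omega), mul_zero, map_zero]⟩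

theorem S_d {p : ℤ × ℤ} {a} (ha : a ∈ S A p) : A.d a ∈ T A (p.1 + 1, p.2) := by
  obtain ⟨h1, h2, h3⟩ := ha
  refine ⟨⟨A.d_mem h1, fun h => ?_, fun _ => A.d_squared a⟩, fun _ => ⟨a, rfl⟩⟩
  simp only at h
  rcases lt_or_eq_of_le (show p.2 ≤ p.1 by omega) with h4 | h4
  · rw [h2 h4, map_zero]
  · exact h3 h4

theorem iSup_mul_mem {X Y Z : ℤ × ℤ → Submodule k A.carrier}
    (h : ∀ p r a b, a ∈ X p → b ∈ Y r → a * b ∈ Z (p + r)) {a b}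
    (ha : a ∈ ⨆ p, X p) (hb : b ∈ ⨆ p, Y p) : a * b ∈ ⨆ p, Z p := by
  have h1 : (⨆ p, X p) * (⨆ p, Y p) ≤ ⨆ p, Z p := by
    rw [Submodule.iSup_mul]
    refine iSup_le fun p => ?_
    rw [Submodule.mul_iSup]
    refine iSup_le fun r => ?_
    rw [Submodule.mul_le]
    intro a ha b hb
    exact Submodule.mem_iSup_of_mem (p + r) (h p r a b ha hb)
  exact h1 (Submodule.mul_mem_mul ha hb)

theorem q_iSup {X : ℤ × ℤ → Submodule k A.carrier} (hX : ∀ p, X p ≤ G A p) {a}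
    (ha : a ∈ ⨆ p, X p) (i) : q A i a ∈ X i := by
  have : (⨆ p, X p) ≤ (X i).comap (q A i) := by
    refine iSup_le fun p x hx => ?_
    rw [Submodule.mem_comap]
    by_cases h : i = p
    · subst h
      rwa [q_same A i x (hX _ hx)]
    · rw [q_ne A i p h x (hX _ hx)]
      exact zero_mem _
  exact this ha

theorem S_le (p) : S A p ≤ G A p := fun _ h => h.1
theorem T_le_S (p) : T A p ≤ S A p := fun _ h => h.1
theorem T_le (p) : T A p ≤ G A p := fun _ h => h.1.1

/-- the truncation, as a subalgebra -/
def BS : Subalgebra k A.carrier :=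
  Submodule.toSubalgebra (⨆ p, S A p)
    (Submodule.mem_iSup_of_mem 0 ⟨one_mem A, fun h => absurd h (by simp), fun _ => A.d_one⟩)
    (fun _ _ ha hb => iSup_mul_mem A (fun _ _ _ _ h h' => S_mul A h h') ha hb)

theorem mem_BS {a} : a ∈ BS A ↔ a ∈ ⨆ p, S A p := Iff.rfl

theorem d_BS {a} (ha : a ∈ BS A) : A.d a ∈ ⨆ p, T A p := by
  have : (⨆ p, S A p) ≤ (⨆ p, T A p).comap A.d :=
    iSup_le fun p x hx => Submodule.mem_iSup_of_mem (p.1+1, p.2) (S_d A hx)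
  exact this ha

theorem T_sub : (⨆ p, T A p) ≤ ⨆ p, S A p := iSup_mono (T_le_S A)

/-- differential on the truncation -/
def dB : BS A →ₗ[k] BS A :=
  (A.d ∘ₗ (BS A).val.toLinearMap).codRestrict (Subalgebra.toSubmodule (BS A))
    (fun a => T_sub A (d_BS A a.2))

/-- projections on the truncation -/
noncomputable def qB (i : ℤ × ℤ) : BS A →ₗ[k] BS A :=
  (q A i ∘ₗ (BS A).val.toLinearMap).codRestrict (Subalgebra.toSubmodule (BS A))
    (fun a => Submodule.mem_iSup_of_mem i (q_iSup A (S_le A) a.2 i))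

theorem dB_coe (a : BS A) : (dB A a : A.carrier) = A.d a := rfl
theorem qB_coe (i) (a : BS A) : (qB A i a : A.carrier) = q A i a := rfl

/-- grading on the truncation -/
def GB (n w : ℤ) : Submodule k (BS A) := (A.grading n w).comap (BS A).val.toLinearMap

theorem mem_GB {n w} {a : BS A} : a ∈ GB A n w ↔ (a : A.carrier) ∈ A.grading n w := Iff.rfl

theorem GB_top (x : BS A) : x ∈ ⨆ p : ℤ × ℤ, GB A p.1 p.2 := by
  have h : (x : A.carrier) ∈ (⨆ p : ℤ × ℤ, GB A p.1 p.2).map (BS A).val.toLinearMap := by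
    refine mem_of_q A _ _ fun i => ⟨qB A i x, ?_, rfl⟩
    exact Submodule.mem_iSup_of_mem i (q_mem A i x)
  obtain ⟨y, hy, hyx⟩ := h
  have : y = x := Subtype.ext hyx
  rwa [← this]

/-- the truncation -/
noncomputable def B : DGWAlg k where
  carrier := BS A
  grading := GB A
  internal := isInternal_of_proj _ (qB A)
    (fun i x hx => Subtype.ext (q_same A i _ hx))
    (fun i j h x hx => Subtype.ext (q_ne A i j h _ hx)) (GB_top A)
  mul_mem := fun ha hb => A.mul_mem ha hb
  d := dB A
  d_squared := fun a => Subtype.ext (A.d_squared a)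
  d_mem := fun ha => A.d_mem ha
  d_one := Subtype.ext A.d_one
  leibniz := fun a b ha => by
    apply Subtype.ext
    have := A.leibniz (a : A.carrier) b ha
    simpa [dB_coe] using this

/-- the ideal -/
def I : Ideal (BS A) where
  carrier := {a | (a : A.carrier) ∈ ⨆ p, T A p}
  zero_mem' := zero_mem (⨆ p, T A p)
  add_mem' := fun ha hb => Submodule.add_mem (⨆ p, T A p) ha hb
  smul_mem' := fun a _ hb => iSup_mul_mem A (fun _ _ _ _ h h' => ST_mul A h h') a.2 hb

theorem mem_I {a : BS A} : a ∈ I A ↔ (a : A.carrier) ∈ ⨆ p, T A p := Iff.rfl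

instance : (I A).IsTwoSided :=
  ⟨fun {_} b ha => iSup_mul_mem A (fun _ _ _ _ h h' => TS_mul A h h') ha b.2⟩

/-- quotient map -/
def g : BS A →ₐ[k] (BS A ⧸ I A) := Ideal.Quotient.mkₐ k (I A)

theorem g_surj : Function.Surjective (g A) := Ideal.Quotient.mkₐ_surjective k (I A)

theorem g_eq_zero {a : BS A} : g A a = 0 ↔ a ∈ I A := Ideal.Quotient.eq_zero_iff_mem

theorem exists_qH (i) : ∃ f : (BS A ⧸ I A) →ₗ[k] (BS A ⧸ I A),
    ∀ a, f (g A a) = g A (qB A i a) := by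
  have hk : LinearMap.ker (g A).toLinearMap ≤ LinearMap.ker ((g A).toLinearMap ∘ₗ qB A i) := by
    intro a ha
    have ha' : a ∈ I A := (g_eq_zero A).1 ha
    refine (g_eq_zero A).2 ?_
    rw [mem_I, qB_coe]
    exact Submodule.mem_iSup_of_mem i (q_iSup A (T_le A) ha' i)
  let e := (g A).toLinearMap.quotKerEquivOfSurjective (g_surj A)
  refine ⟨(LinearMap.ker (g A).toLinearMap).liftQ _ hk ∘ₗ e.symm.toLinearMap, fun a => ?_⟩
  have : e.symm (g A a) = Submodule.Quotient.mk a := by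
    rw [LinearEquiv.symm_apply_eq]
    rfl
  simp only [LinearMap.comp_apply, LinearEquiv.coe_coe]
  rw [this]
  rfl

/-- grading on the cohomology -/
def GH (n w : ℤ) : Submodule k (BS A ⧸ I A) := (GB A n w).map (g A).toLinearMap

/-- the cohomology -/
noncomputable def H : DGWAlg k where
  carrier := BS A ⧸ I A
  grading := GH A
  internal := isInternal_of_proj _ (fun i => (exists_qH A i).choose)
    (by
      rintro i _ ⟨x, hx, rfl⟩
      refine ((exists_qH A i).choose_spec x).trans (congrArg _ ?_)
      exact Subtype.ext (q_same A i _ hx))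
    (by
      rintro i j h _ ⟨x, hx, rfl⟩
      refine ((exists_qH A i).choose_spec x).trans ?_
      have : qB A i x = 0 := Subtype.ext (q_ne A i j h _ hx)
      rw [this, map_zero])
    (by
      intro y
      obtain ⟨x, rfl⟩ := g_surj A y
      have := Submodule.mem_map_of_mem (f := (g A).toLinearMap) (GB_top A x)
      rw [Submodule.map_iSup] at this
      exact this)
  mul_mem := by
    rintro n w m v _ _ ⟨a, ha, rfl⟩ ⟨b, hb, rfl⟩
    exact ⟨a * b, A.mul_mem ha hb, map_mul (g A) a b⟩
  d := 0
  d_squared := fun _ => rfl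
  d_mem := fun _ => zero_mem _
  d_one := rfl
  leibniz := fun a b _ => by simp

end FormalPure

open FormalPure

/-- Let `k` be a field and `A` a dg `k`-algebra with an additional
multiplicative weight grading preserved by the differential.  If for every `n` the
cohomology `H^n(A)` is pure of weight `n` (every cocycle of bidegree `(n, w)` with `w ≠ n`
is a coboundary), then `A` is formal: `A` is connected to a dg algebra with zero
differential (i.e. its cohomology `H(A)`) by a chain of quasi-isomorphisms of dg
algebras. -/
theorem formal_of_pure
    (k : Type) [Field k] (A : DGWAlg k)
    (hpure : ∀ n w : ℤ, w ≠ n → ∀ a ∈ A.grading n w, A.d a = 0 → ∃ b, A.d b = a) :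
    ∃ (H B : DGWAlg k) (f : B.carrier →ₐ[k] A.carrier) (g : B.carrier →ₐ[k] H.carrier),
      H.d = 0 ∧
      IsDGHom B A f ∧ IsDGHom B H g ∧ IsQuasiIso B A f ∧ IsQuasiIso B H g := by
  -- cocycles commute with projections
  have hq : ∀ a : A.carrier, A.d a = 0 → ∀ i, A.d (q A i a) = 0 := by
    rintro a ha ⟨n, w⟩
    rw [← q_d, ha, map_zero]
  -- exactness inside the truncation
  have hex : ∀ a : BS A, (∀ i, ∃ b, A.d b = q A i a) → ∃ x : BS A, dB A x = a := by
    intro a h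
    have : (a : A.carrier) ∈ (⨆ p, S A p).map A.d := by
      refine mem_of_q A _ _ ?_
      rintro ⟨n, w⟩
      have hS : q A (n, w) a ∈ S A (n, w) := q_iSup A (S_le A) a.2 (n, w)
      obtain ⟨c, hc, hca⟩ := exists_prim A n w _ (q_mem A (n, w) a) (h (n, w))
      rcases lt_or_ge w n with h1 | h1
      · rw [hS.2.1 h1]
        exact zero_mem _
      · refine ⟨c, Submodule.mem_iSup_of_mem (n - 1, w) ⟨hc, fun h2 => ?_, fun h2 => ?_⟩, hca⟩
        · simp only at h2
          omega
        · simp only at h2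
          omega
    obtain ⟨x, hx, hxa⟩ := this
    exact ⟨⟨x, hx⟩, Subtype.ext hxa⟩
  refine ⟨FormalPure.H A, FormalPure.B A, (BS A).val, FormalPure.g A, rfl, ⟨fun _ => rfl, ?_⟩,
    ⟨?_, ?_⟩, ⟨?_, ?_⟩, ⟨?_, ?_⟩⟩
  · intro n
    unfold DGWAlg.deg
    rw [Submodule.map_iSup]
    refine iSup_mono fun w => ?_
    rintro _ ⟨x, hx, rfl⟩
    exact hx
  · intro a
    exact (g_eq_zero A).2 (d_BS A a.2)
  · intro n
    unfold DGWAlg.deg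
    rw [Submodule.map_iSup]
    exact iSup_mono fun w => le_rfl
  · rintro a - ⟨b, hb⟩
    refine hex a ?_
    rintro ⟨n, w⟩
    refine ⟨q A (n - 1, w) b, ?_⟩
    rw [← q_d, sub_add_cancel, hb]
    rfl
  · intro b hb
    have : b ∈ ((⨆ p, S A p) ⊓ LinearMap.ker A.d) ⊔ LinearMap.range A.d := by
      refine mem_of_q A _ _ ?_
      rintro ⟨n, w⟩
      by_cases h : w = n
      · refine Submodule.mem_sup_left ⟨Submodule.mem_iSup_of_mem (n, w) ⟨q_mem A _ _, ?_, ?_⟩, ?_⟩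
        · intro h'
          simp only at h'
          omega
        · exact fun _ => hq b hb _
        · exact hq b hb _
      · exact Submodule.mem_sup_right (hpure n w h _ (q_mem A (n, w) b) (hq b hb _))
    obtain ⟨a, ⟨ha, ha'⟩, _, ⟨c, rfl⟩, rfl⟩ := Submodule.mem_sup.1 this
    refine ⟨⟨a, ha⟩, Subtype.ext ha', c, ?_⟩
    exact (add_sub_cancel_left a (A.d c)).symm
  · rintro a ha ⟨b, hb⟩
    have haI : a ∈ I A := (g_eq_zero A).1 hb.symm
    have ha0 : A.d (show BS A from a) = 0 := congrArg Subtype.val ha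
    refine hex a ?_
    rintro ⟨n, w⟩
    by_cases h : w = n
    · exact (q_iSup A (T_le A) haI (n, w)).2 h
    · exact hpure n w h _ (q_mem A (n, w) _) (hq _ ha0 _)
  · intro y _
    obtain ⟨b, rfl⟩ := g_surj A y
    have : (b : A.carrier) ∈ ((⨆ p, S A p) ⊓ LinearMap.ker A.d) ⊔ (⨆ p, T A p) := by
      refine mem_of_q A _ _ fun i => ?_
      have hS := q_iSup A (S_le A) b.2 i
      by_cases h : i.2 = i.1
      · exact Submodule.mem_sup_left ⟨Submodule.mem_iSup_of_mem i hS, hS.2.2 h⟩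
      · exact Submodule.mem_sup_right (Submodule.mem_iSup_of_mem i ⟨hS, fun h' => absurd h' h⟩)
    obtain ⟨a, ⟨ha, ha'⟩, t, ht, hab⟩ := Submodule.mem_sup.1 this
    refine ⟨⟨a, ha⟩, Subtype.ext ha', 0, ?_⟩
    have hI : b - (⟨a, ha⟩ : BS A) ∈ I A := by
      rw [mem_I]
      have : ((b - (⟨a, ha⟩ : BS A) : BS A) : A.carrier) = t := by
        rw [AddSubgroupClass.coe_sub, ← hab]
        exact add_sub_cancel_left a t
      rwa [this]
    have h0 := (g_eq_zero A).2 hI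
    rw [map_sub] at h0
    exact h0.symm
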